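/- Let g ∈ H', f^0 ∈ H, and define the iterates f^{n+1} = T(f^n) where T(f) = S_{W,P}(f + K*(g − Kf)). Then the sequence (f^n) converges in norm: there exists f* ∈ H which is a minimizer of Φ over H such that ‖f^n − f*‖ → 0 as n → ∞. -/

import Mathlib

open scoped RealInnerProductSpace ENNReal

/-- Convexity turns the minimality of `y` for `x ↦ x² - 2bx + w|x|^p` into the statement that
`2 (b - y)` is a subgradient of `w|·|^p` at `y`. -/
theorem subgradient_of_minimizer {w p b y : ℝ} (hw : 0 ≤ w) (hp : 1 ≤ p)
    (hy : ∀ x : ℝ, y ^ 2 - 2 * b * y + w * |y| ^ p ≤ x ^ 2 - 2 * b * x + w * |x| ^ p) (x : ℝ) :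
    w * |y| ^ p + 2 * (b - y) * (x - y) ≤ w * |x| ^ p := by
  have hconv : ConvexOn ℝ Set.univ fun x : ℝ => |x| ^ p := by
    refine ⟨convex_univ, fun a _ d _ s t hs ht hst => ?_⟩
    calc |s • a + t • d| ^ p ≤ (s • |a| + t • |d|) ^ p := by
          refine Real.rpow_le_rpow (abs_nonneg _) ?_ (by linarith)
          simpa [abs_mul, abs_of_nonneg hs, abs_of_nonneg ht] using abs_add_le (s * a) (t * d)
      _ ≤ s • |a| ^ p + t • |d| ^ p :=
          (convexOn_rpow hp).2 (Set.mem_Ici.2 (abs_nonneg a)) (Set.mem_Ici.2 (abs_nonneg d))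
            hs ht hst
  have key : ∀ t : ℝ, 0 < t → t ≤ 1 →
      w * |y| ^ p + 2 * (b - y) * (x - y) - w * |x| ^ p ≤ t * (x - y) ^ 2 := by
    intro t ht ht1
    have h1 := hy ((1 - t) * y + t * x)
    have h2 := hconv.2 (Set.mem_univ y) (Set.mem_univ x) (by linarith : 0 ≤ 1 - t) ht.le (by ring)
    simp only [smul_eq_mul] at h2
    have h3 := mul_le_mul_of_nonneg_left h2 hw
    have h4 : t * (w * |y| ^ p + 2 * (b - y) * (x - y) - w * |x| ^ p) ≤ t * (t * (x - y) ^ 2) := by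
      nlinarith
    exact le_of_mul_le_mul_left h4 ht
  by_contra! hlt
  have hlim : Filter.Tendsto (fun t : ℝ => t * (x - y) ^ 2) (nhdsWithin 0 (Set.Ioi 0)) (nhds 0) := by
    have : Continuous fun t : ℝ => t * (x - y) ^ 2 := by fun_prop
    simpa using (this.tendsto 0).mono_left nhdsWithin_le_nhds
  have hle := ge_of_tendsto hlim (b := w * |y| ^ p + 2 * (b - y) * (x - y) - w * |x| ^ p) (by
    filter_upwards [Ioc_mem_nhdsGT (zero_lt_one (α := ℝ))] with t ht using key t ht.1 ht.2)
  linarith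

theorem le_mul_rpow_of_rpow_le {q x : ℝ} (hq : 0 < q) (hq1 : q ≤ 1) (hx : 0 < x)
    (hxq : x ^ q ≤ 1 / 4) : x ≤ q * x ^ q := by
  have hlog : q * Real.log x ≤ -1 := by
    rw [← Real.log_rpow hx]
    have h1 : x ^ q ≤ Real.exp (-1) := by
      refine hxq.trans ?_
      rw [Real.exp_neg, one_div]
      exact inv_anti₀ (Real.exp_pos 1) (by linarith [Real.exp_one_lt_d9])
    simpa using Real.log_le_log (Real.rpow_pos_of_pos hx q) h1
  have h2 : Real.log q⁻¹ ≤ q⁻¹ - 1 := Real.log_le_sub_one_of_pos (by positivity)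
  rw [Real.log_inv] at h2
  have h3 : q⁻¹ - 1 ≤ (1 - q) * (- Real.log x) := by
    have : q⁻¹ ≤ - Real.log x := by
      rw [inv_le_iff_one_le_mul₀ hq]; linarith
    calc q⁻¹ - 1 = (1 - q) * q⁻¹ := by field_simp
      _ ≤ _ := mul_le_mul_of_nonneg_left this (by linarith)
  rw [← Real.log_le_log_iff hx (by positivity), Real.log_mul hq.ne' (by positivity),
    Real.log_rpow hx]
  linarith

theorem sub_le_rpow_sub_rpow {q x y : ℝ} (hq : 0 < q) (hq1 : q ≤ 1) (hy : 0 ≤ y) (hyx : y ≤ x)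
    (hxq : x ^ q ≤ 1 / 4) : x - y ≤ x ^ q - y ^ q := by
  rcases (hy.trans hyx).eq_or_lt with h0 | hx
  · have : y = x := by linarith
    simp [this]
  have h1 := le_mul_rpow_of_rpow_le hq hq1 hx hxq
  have h2 := rpow_one_add_le_one_add_mul_self (s := y / x - 1)
    (by have := div_nonneg hy hx.le; linarith) hq.le hq1
  rw [add_sub_cancel, Real.div_rpow hy hx.le, div_le_iff₀ (by positivity)] at h2
  have h3 : 0 ≤ 1 - y / x := by
    rw [sub_nonneg, div_le_one hx]; exact hyx
  have h4 := mul_le_mul_of_nonneg_right h1 h3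
  have h5 : x * (1 - y / x) = x - y := by field_simp
  nlinarith

/-- `|z|^(p-2) z = sign z |z|^(p-1)` expands distances near the origin. -/
theorem abs_sub_le_signed_rpow {p y z : ℝ} (hp : 1 < p) (hp2 : p ≤ 2)
    (hy : |y| ^ (p - 1) ≤ 1 / 4) (hz : |z| ^ (p - 1) ≤ 1 / 4) :
    |y - z| ≤ |(|y| ^ (p - 2) * y - |z| ^ (p - 2) * z)| := by
  have pos : ∀ {x : ℝ}, 0 ≤ x → |x| ^ (p - 2) * x = x ^ (p - 1) := by
    intro x hx
    rcases hx.eq_or_lt with rfl | hx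
    · rw [mul_zero, Real.zero_rpow (by linarith)]
    · rw [abs_of_pos hx, ← Real.rpow_add_one hx.ne']; ring_nf
  have same : ∀ {y z : ℝ}, |y| ^ (p - 1) ≤ 1 / 4 → 0 ≤ z → z ≤ y →
      |y - z| ≤ |(|y| ^ (p - 2) * y - |z| ^ (p - 2) * z)| := by
    intro y z hy h0 hzy
    rw [pos h0, pos (h0.trans hzy), abs_of_nonneg (sub_nonneg.2 hzy)]
    rw [abs_of_nonneg (h0.trans hzy)] at hy
    exact (sub_le_rpow_sub_rpow (by linarith) (by linarith) h0 hzy hy).trans (le_abs_self _)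
  have opp : ∀ {y z : ℝ}, |y| ^ (p - 1) ≤ 1 / 4 → |z| ^ (p - 1) ≤ 1 / 4 → 0 ≤ y → z ≤ 0 →
      |y - z| ≤ |(|y| ^ (p - 2) * y - |z| ^ (p - 2) * z)| := by
    intro y z hy hz h0 hz0
    have hz' : |z| ^ (p - 2) * z = -((-z) ^ (p - 1)) := by
      rw [← pos (neg_nonneg.2 hz0), abs_neg]; ring
    rw [pos h0, hz', abs_of_nonneg (by linarith : 0 ≤ y - z)]
    rw [abs_of_nonneg h0] at hy
    rw [abs_of_nonpos hz0] at hz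
    have hq : p - 1 ≠ 0 := by linarith
    have h1 := sub_le_rpow_sub_rpow (by linarith) (by linarith) le_rfl h0 hy
    have h2 := sub_le_rpow_sub_rpow (by linarith) (by linarith) le_rfl (neg_nonneg.2 hz0) hz
    rw [Real.zero_rpow hq] at h1 h2
    exact le_trans (by linarith) (le_abs_self _)
  have flip : ∀ {y z : ℝ}, |(-y - -z)| ≤ |(|(-y)| ^ (p - 2) * -y - |(-z)| ^ (p - 2) * -z)| →
      |y - z| ≤ |(|y| ^ (p - 2) * y - |z| ^ (p - 2) * z)| := by
    intro y z h
    rw [abs_neg, abs_neg, ← abs_neg, ← abs_neg (_ - _ : ℝ)] at h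
    convert h using 2 <;> ring
  rcases le_total 0 y with h1 | h1 <;> rcases le_total 0 z with h2 | h2
  · rcases le_total z y with h3 | h3
    · exact same hy h2 h3
    · rw [abs_sub_comm, abs_sub_comm (_ * _)]
      exact same hz h1 h3
  · exact opp hy hz h1 h2
  · rw [abs_sub_comm, abs_sub_comm (_ * _)]
    exact opp hz hy h2 h1
  · apply flip
    rcases le_total z y with h3 | h3
    · rw [abs_sub_comm, abs_sub_comm (_ * _)]
      exact same (by rwa [abs_neg]) (by linarith) (by linarith)
    · exact same (by rwa [abs_neg]) (by linarith) (by linarith)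

theorem abs_abs_rpow_mul_self {p : ℝ} (hp : 1 < p) (y : ℝ) :
    |(|y| ^ (p - 2) * y)| = |y| ^ (p - 1) := by
  rcases eq_or_ne y 0 with rfl | hy
  · simp [Real.zero_rpow (by linarith : p - 1 ≠ 0)]
  · rw [abs_mul, abs_of_nonneg (Real.rpow_nonneg (abs_nonneg y) _),
      ← Real.rpow_add_one (abs_ne_zero.2 hy)]
    ring_nf

theorem two_mul_subgradient_eq {w p η y : ℝ} (hp : 1 < p)
    (h : ∀ x : ℝ, w * |y| ^ p + 2 * η * (x - y) ≤ w * |x| ^ p) :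
    2 * η = w * p * (|y| ^ (p - 2) * y) := by
  have hmin : IsLocalMin (fun x : ℝ => w * |x| ^ p - 2 * η * x) y :=
    Filter.Eventually.of_forall fun x => by linarith [h x]
  have hder := ((hasDerivAt_abs_rpow y hp).const_mul w).sub ((hasDerivAt_id y).const_mul (2 * η))
  linarith [hmin.hasDerivAt_eq_zero hder]

/-- Small subgradients of `w|·|^p` control the displacement of their base points, uniformly in
`w ≥ c` and `p ∈ [1, 2]`. -/
theorem mul_abs_sub_le_abs_subgradient_sub {w c p B η ζ y z : ℝ} (hc : 0 < c) (hw : c ≤ w)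
    (hp : 1 ≤ p) (hp2 : p ≤ 2) (hB : 1 ≤ B)
    (hy : ∀ x : ℝ, w * |y| ^ p + 2 * η * (x - y) ≤ w * |x| ^ p)
    (hz : ∀ x : ℝ, w * |z| ^ p + 2 * ζ * (x - z) ≤ w * |x| ^ p)
    (hζ : |ζ| ≤ c / 16) (hyz : |y - z| ≤ B) :
    c / (16 * B) * |y - z| ≤ |η - ζ| := by
  have hB0 : 0 < B := by linarith
  have hfar : c / (16 * B) * |y - z| ≤ c / 16 := by
    calc c / (16 * B) * |y - z| ≤ c / (16 * B) * B := by gcongr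
      _ = c / 16 := by field_simp
  rcases hp.eq_or_lt with rfl | hp
  · have base : ∀ {η y : ℝ}, (∀ x : ℝ, w * |y| ^ (1 : ℝ) + 2 * η * (x - y) ≤ w * |x| ^ (1 : ℝ)) →
        y ≠ 0 → c / 2 ≤ |η| := by
      intro η y h hy0
      have h0 := h 0
      simp only [Real.rpow_one, abs_zero, mul_zero] at h0
      have h1 : η * y ≤ |η| * |y| := by rw [← abs_mul]; exact le_abs_self _
      have h2 : 0 < |y| := abs_pos.2 hy0
      nlinarith
    have hz0 : z = 0 := by
      by_contra hne
      linarith [base hz hne]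
    rcases eq_or_ne y 0 with rfl | hy0
    · simp [hz0]
    · linarith [base hy hy0, abs_sub_abs_le_abs_sub η ζ]
  · have ey := two_mul_subgradient_eq hp hy
    have ez := two_mul_subgradient_eq hp hz
    have hwp : c ≤ w * p := by nlinarith
    have hscale : ∀ t : ℝ, c * |t| ≤ |w * p * t| := fun t => by
      rw [abs_mul, abs_of_nonneg (by linarith : 0 ≤ w * p)]
      gcongr
    have hdiff : c * |(|y| ^ (p - 2) * y - |z| ^ (p - 2) * z)| ≤ 2 * |η - ζ| := by
      refine (hscale _).trans (le_of_eq ?_)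
      rw [mul_sub, ← ey, ← ez, ← mul_sub, abs_mul, abs_two]
    have hσz : |z| ^ (p - 1) ≤ 1 / 8 := by
      have := hscale (|z| ^ (p - 2) * z)
      rw [← ez, abs_abs_rpow_mul_self hp, abs_mul, abs_two] at this
      nlinarith
    rcases le_or_gt (|y| ^ (p - 1)) (1 / 4) with hσy | hσy
    · have h1 := abs_sub_le_signed_rpow (z := z) hp hp2 hσy (by linarith)
      have h2 : c / (16 * B) ≤ c / 2 := by
        gcongr
        linarith
      have h3 := mul_le_mul_of_nonneg_right h2 (abs_nonneg (y - z))
      have h4 := mul_le_mul_of_nonneg_left h1 hc.le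
      linarith
    · have h1 := abs_sub_abs_le_abs_sub (|y| ^ (p - 2) * y) (|z| ^ (p - 2) * z)
      rw [abs_abs_rpow_mul_self hp, abs_abs_rpow_mul_self hp] at h1
      have h2 : c * (1 / 8) ≤ c * |(|y| ^ (p - 2) * y - |z| ^ (p - 2) * z)| := by
        gcongr
        linarith
      linarith

section HilbertSpace

variable {H : Type*} [NormedAddCommGroup H] [InnerProductSpace ℝ H] {Γ : Type*}

theorem HilbertBasis.hasSum_coord_mul_coord (e : HilbertBasis Γ ℝ H) (x y : H) :
    HasSum (fun γ => ⟪x, e γ⟫ * ⟪y, e γ⟫) ⟪x, y⟫ := by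
  simpa only [real_inner_comm] using e.hasSum_inner_mul_inner x y

theorem HilbertBasis.hasSum_coord_sq (e : HilbertBasis Γ ℝ H) (x : H) :
    HasSum (fun γ => ⟪x, e γ⟫ ^ 2) (‖x‖ ^ 2) := by
  simpa only [sq, real_inner_self_eq_norm_mul_norm] using e.hasSum_coord_mul_coord x x

theorem HilbertBasis.norm_le_mul_norm_of_coord (e : HilbertBasis Γ ℝ H) {x y : H} {C : ℝ}
    (hC : 0 ≤ C) (h : ∀ γ, |⟪x, e γ⟫| ≤ C * |⟪y, e γ⟫|) : ‖x‖ ≤ C * ‖y‖ := by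
  refine le_of_sq_le_sq ?_ (by positivity)
  rw [mul_pow]
  refine hasSum_le (fun γ => ?_) (e.hasSum_coord_sq x) ((e.hasSum_coord_sq y).mul_left (C ^ 2))
  rw [← sq_abs, ← sq_abs ⟪y, e γ⟫, ← mul_pow]
  exact pow_le_pow_left₀ (abs_nonneg _) (h γ) 2

theorem HilbertBasis.finite_setOf_lt_abs_coord (e : HilbertBasis Γ ℝ H) (x : H) {δ : ℝ}
    (hδ : 0 < δ) : {γ | δ < |⟪x, e γ⟫|}.Finite := by
  have h := (e.hasSum_coord_sq x).summable.tendsto_cofinite_zero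
  have h' := h.eventually (gt_mem_nhds (show (0 : ℝ) < δ ^ 2 by positivity))
  refine Set.Finite.subset (Filter.eventually_cofinite.1 h') fun γ hγ => ?_
  simp only [Set.mem_ofPred_eq, not_lt] at hγ ⊢
  rw [← sq_abs ⟪x, e γ⟫]
  exact pow_le_pow_left₀ hδ.le hγ.le 2

/-- `2η` is a subgradient at `y` of `f ↦ ∑ w_γ |f_γ|^{p_γ}`, coordinate by coordinate. -/
def IsCoordSubgradient (e : HilbertBasis Γ ℝ H) (w p : Γ → ℝ) (η y : H) : Prop :=
  ∀ (γ : Γ) (x : ℝ),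
    w γ * |⟪y, e γ⟫| ^ p γ + 2 * ⟪η, e γ⟫ * (x - ⟪y, e γ⟫) ≤ w γ * |x| ^ p γ

namespace IsCoordSubgradient

variable {e : HilbertBasis Γ ℝ H} {w p : Γ → ℝ} {η ζ y z : H}

theorem inner_sub_nonneg (hy : IsCoordSubgradient e w p η y)
    (hz : IsCoordSubgradient e w p ζ z) : 0 ≤ ⟪η - ζ, y - z⟫ := by
  refine (e.hasSum_coord_mul_coord (η - ζ) (y - z)).nonneg fun γ => ?_
  rw [inner_sub_left, inner_sub_left]
  nlinarith [hy γ ⟪z, e γ⟫, hz γ ⟪y, e γ⟫]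

/-- Firm nonexpansiveness of the resolvent `y + η ↦ y`. -/
theorem norm_sub_sq_add_le (hy : IsCoordSubgradient e w p η y)
    (hz : IsCoordSubgradient e w p ζ z) :
    ‖y - z‖ ^ 2 + ‖η - ζ‖ ^ 2 ≤ ‖(y + η) - (z + ζ)‖ ^ 2 := by
  have h : (y + η) - (z + ζ) = (y - z) + (η - ζ) := by abel
  rw [h, norm_add_sq_real, real_inner_comm]
  linarith [hy.inner_sub_nonneg hz]

/-- The subgradient inequality for `f ↦ ∑ w_γ |f_γ|^{p_γ}`. -/
theorem toReal_tsum_add_le (hw : ∀ γ, 0 ≤ w γ) (hy : IsCoordSubgradient e w p η y) (x : H)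
    (hx : ∑' γ, ENNReal.ofReal (w γ * |⟪x, e γ⟫| ^ p γ) ≠ ∞) :
    ∑' γ, ENNReal.ofReal (w γ * |⟪y, e γ⟫| ^ p γ) ≠ ∞ ∧
      (∑' γ, ENNReal.ofReal (w γ * |⟪y, e γ⟫| ^ p γ)).toReal + 2 * ⟪η, x - y⟫ ≤
        (∑' γ, ENNReal.ofReal (w γ * |⟪x, e γ⟫| ^ p γ)).toReal := by
  have nonneg : ∀ (f : H) γ, 0 ≤ w γ * |⟪f, e γ⟫| ^ p γ := fun f γ =>
    mul_nonneg (hw γ) (Real.rpow_nonneg (abs_nonneg _) _)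
  have toReal_eq : ∀ f : H, (∑' γ, ENNReal.ofReal (w γ * |⟪f, e γ⟫| ^ p γ)).toReal =
      ∑' γ, w γ * |⟪f, e γ⟫| ^ p γ := fun f => by
    rw [ENNReal.tsum_toReal_eq fun _ => ENNReal.ofReal_ne_top]
    simp only [ENNReal.toReal_ofReal (nonneg f _)]
  have sx : Summable fun γ => w γ * |⟪x, e γ⟫| ^ p γ := by
    have := ENNReal.summable_toReal hx
    simpa only [ENNReal.toReal_ofReal (nonneg x _)] using this
  have hin := (e.hasSum_coord_mul_coord η (x - y)).mul_left 2
  have hle : ∀ γ, w γ * |⟪y, e γ⟫| ^ p γ + 2 * (⟪η, e γ⟫ * ⟪x - y, e γ⟫) ≤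
      w γ * |⟪x, e γ⟫| ^ p γ := fun γ => by
    rw [inner_sub_left]
    linarith [hy γ ⟪x, e γ⟫]
  have sy : Summable fun γ => w γ * |⟪y, e γ⟫| ^ p γ :=
    Summable.of_nonneg_of_le (nonneg y) (fun γ => by linarith [hle γ]) (sx.sub hin.summable)
  refine ⟨?_, ?_⟩
  · rw [← ENNReal.ofReal_tsum_of_nonneg (nonneg y) sy]
    exact ENNReal.ofReal_ne_top
  · rw [toReal_eq, toReal_eq]
    exact hasSum_le hle (sy.hasSum.add hin) sx.hasSum

/-- Away from finitely many coordinates, the distance to `z` is controlled by the distance between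
the subgradients. -/
theorem exists_finset_norm_sub_sum_le {c B : ℝ} (hc : 0 < c) (hw : ∀ γ, c ≤ w γ)
    (hp : ∀ γ, 1 ≤ p γ ∧ p γ ≤ 2) (hB : 1 ≤ B) (hz : IsCoordSubgradient e w p ζ z) :
    ∃ F : Finset Γ, ∀ η y : H, IsCoordSubgradient e w p η y → ‖y - z‖ ≤ B →
      ‖(y - z) - ∑ γ ∈ F, ⟪y - z, e γ⟫ • e γ‖ ≤ 16 * B / c * ‖η - ζ‖ := by
  classical
  have hfin := e.finite_setOf_lt_abs_coord ζ (show 0 < c / 16 by positivity)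
  refine ⟨hfin.toFinset, fun η y hy hyB => e.norm_le_mul_norm_of_coord (by positivity) fun γ => ?_⟩
  have hnorm : ‖e γ‖ = 1 := e.orthonormal.1 γ
  have hcoord : ⟪∑ i ∈ hfin.toFinset, ⟪y - z, e i⟫ • e i, e γ⟫ =
      if γ ∈ hfin.toFinset then ⟪y - z, e γ⟫ else 0 := by
    simp only [sum_inner, inner_smul_left, orthonormal_iff_ite.1 e.orthonormal]
    simp
  rw [inner_sub_left, hcoord]
  split_ifs with hγ
  · rw [sub_self, abs_zero]
    positivity
  · have hζ : |⟪ζ, e γ⟫| ≤ c / 16 := by simpa using hγ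
    have hyz : |⟪y, e γ⟫ - ⟪z, e γ⟫| ≤ B := by
      rw [← inner_sub_left]
      have := abs_real_inner_le_norm (y - z) (e γ)
      rw [hnorm, mul_one] at this
      exact this.trans hyB
    have h := mul_abs_sub_le_abs_subgradient_sub hc (hw γ) (hp γ).1 (hp γ).2 hB (hy γ) (hz γ) hζ hyz
    rw [sub_zero, inner_sub_left, inner_sub_left]
    calc |⟪y, e γ⟫ - ⟪z, e γ⟫| = 16 * B / c * (c / (16 * B) * |⟪y, e γ⟫ - ⟪z, e γ⟫|) := by
          field_simp
      _ ≤ _ := by gcongr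

end IsCoordSubgradient

variable {H' : Type*} [NormedAddCommGroup H'] [InnerProductSpace ℝ H']

theorem ofReal_norm_sq_eq_iSup (z : H') :
    ENNReal.ofReal (‖z‖ ^ 2) = ⨆ y : H', ENNReal.ofReal (2 * ⟪z, y⟫ - ‖y‖ ^ 2) := by
  refine le_antisymm (le_iSup_of_le z ?_) (iSup_le fun y => ENNReal.ofReal_le_ofReal ?_)
  · rw [real_inner_self_eq_norm_sq]
    exact ENNReal.ofReal_le_ofReal (by linarith)
  · have := norm_sub_sq_real z y
    nlinarith [sq_nonneg ‖z - y‖]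

theorem sq_le_max_mul_rpow {w c p M t : ℝ} (hc : 0 < c) (hw : c ≤ w) (hp : 1 ≤ p) (hp2 : p ≤ 2)
    (ht : 0 ≤ t) (hM : w * t ^ p ≤ M) : t ^ 2 ≤ max 1 (M / c) / c * (w * t ^ p) := by
  have hpow : 0 ≤ t ^ p := Real.rpow_nonneg ht p
  have hcw : t ^ p ≤ w * t ^ p / c := by
    rw [le_div_iff₀ hc, mul_comm]
    gcongr
  have hsq : t ^ 2 ≤ max 1 (M / c) * t ^ p := by
    rcases le_or_gt t 1 with h1 | h1
    · calc t ^ 2 = t ^ (2 : ℝ) := (Real.rpow_two t).symm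
        _ ≤ t ^ p := Real.rpow_le_rpow_of_exponent_ge' ht h1 (by linarith) hp2
        _ ≤ _ := le_mul_of_one_le_left hpow (le_max_left _ _)
    · have h2 : t ≤ t ^ p := by
        simpa using Real.rpow_le_rpow_of_exponent_le h1.le hp
      have h3 : t ≤ M / c := h2.trans (hcw.trans (by gcongr))
      calc t ^ 2 = t * t := sq t
        _ ≤ max 1 (M / c) * t ^ p := by
          gcongr
          exact h3.trans (le_max_right _ _)
  calc t ^ 2 ≤ max 1 (M / c) * t ^ p := hsq
    _ ≤ max 1 (M / c) * (w * t ^ p / c) := by gcongr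
    _ = _ := by ring

theorem HilbertBasis.norm_sq_le_of_tsum_le (e : HilbertBasis Γ ℝ H) {w p : Γ → ℝ} {c M : ℝ}
    (hc : 0 < c) (hw : ∀ γ, c ≤ w γ) (hp : ∀ γ, 1 ≤ p γ ∧ p γ ≤ 2) (hM : 0 ≤ M) {f : H}
    (hf : ∑' γ, ENNReal.ofReal (w γ * |⟪f, e γ⟫| ^ p γ) ≤ ENNReal.ofReal M) :
    ‖f‖ ^ 2 ≤ max 1 (M / c) / c * M := by
  have nonneg : ∀ γ, 0 ≤ w γ * |⟪f, e γ⟫| ^ p γ := fun γ =>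
    mul_nonneg (hc.le.trans (hw γ)) (Real.rpow_nonneg (abs_nonneg _) _)
  have hs : Summable fun γ => w γ * |⟪f, e γ⟫| ^ p γ := by
    have := ENNReal.summable_toReal (ne_top_of_le_ne_top ENNReal.ofReal_ne_top hf)
    simpa only [ENNReal.toReal_ofReal (nonneg _)] using this
  rw [← ENNReal.ofReal_tsum_of_nonneg nonneg hs, ENNReal.ofReal_le_ofReal_iff hM] at hf
  have hle : ∀ γ, ⟪f, e γ⟫ ^ 2 ≤ max 1 (M / c) / c * (w γ * |⟪f, e γ⟫| ^ p γ) := fun γ => by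
    rw [← sq_abs]
    exact sq_le_max_mul_rpow hc (hw γ) (hp γ).1 (hp γ).2 (abs_nonneg _)
      ((hs.le_tsum γ fun i _ => nonneg i).trans hf)
  calc ‖f‖ ^ 2 ≤ max 1 (M / c) / c * ∑' γ, w γ * |⟪f, e γ⟫| ^ p γ :=
        hasSum_le hle (e.hasSum_coord_sq f) (hs.hasSum.mul_left _)
    _ ≤ _ := by gcongr

variable [CompleteSpace H] [CompleteSpace H']

/-- Existence of a minimizer, by weak-* compactness of balls and weak lower semicontinuity. -/
theorem exists_minimizer (e : HilbertBasis Γ ℝ H) (K : H →L[ℝ] H') {w p : Γ → ℝ} {c : ℝ}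
    (hc : 0 < c) (hw : ∀ γ, c ≤ w γ) (hp : ∀ γ, 1 ≤ p γ ∧ p γ ≤ 2) (g : H') (Φ : H → ℝ≥0∞)
    (hΦ : ∀ f, Φ f = ENNReal.ofReal (‖K f - g‖ ^ 2) +
      ∑' γ, ENNReal.ofReal (w γ * |⟪f, e γ⟫| ^ p γ)) :
    ∃ f, ∀ f', Φ f ≤ Φ f' := by
  have h0 : Φ 0 = ENNReal.ofReal (‖g‖ ^ 2) := by
    rw [hΦ]
    have hp0 : ∀ γ, p γ ≠ 0 := fun γ => by linarith [(hp γ).1]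
    simp [Real.zero_rpow (hp0 _)]
  set R : ℝ := √(max 1 (‖g‖ ^ 2 / c) / c * ‖g‖ ^ 2)
  have hR0 : 0 ≤ R := Real.sqrt_nonneg _
  set Ψ : WeakDual ℝ H → ℝ≥0∞ := fun φ =>
    Φ ((InnerProductSpace.toDual ℝ H).symm (WeakDual.toStrongDual φ)) with hΨ
  have coord : ∀ (φ : WeakDual ℝ H) (v : H),
      ⟪(InnerProductSpace.toDual ℝ H).symm (WeakDual.toStrongDual φ), v⟫ = φ v := fun φ v =>
    InnerProductSpace.toDual_symm_apply
  have hlsc : LowerSemicontinuous Ψ := by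
    simp only [hΨ, hΦ, ofReal_norm_sq_eq_iSup, coord]
    refine (lowerSemicontinuous_iSup fun y => ?_).add (lowerSemicontinuous_tsum fun γ => ?_)
    · have : ∀ φ : WeakDual ℝ H,
          ⟪K ((InnerProductSpace.toDual ℝ H).symm (WeakDual.toStrongDual φ)) - g, y⟫ =
            φ (ContinuousLinearMap.adjoint K y) - ⟪g, y⟫ := fun φ => by
        rw [inner_sub_left, ← ContinuousLinearMap.adjoint_inner_right, coord]
      simp only [this]
      have := WeakDual.eval_continuous (𝕜 := ℝ) (ContinuousLinearMap.adjoint K y)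
      exact (ENNReal.continuous_ofReal.comp
        (((this.sub continuous_const).const_mul 2).sub continuous_const)).lowerSemicontinuous
    · have := WeakDual.eval_continuous (𝕜 := ℝ) (e γ)
      exact (ENNReal.continuous_ofReal.comp (continuous_const.mul
        (this.abs.rpow_const fun _ => Or.inr (by linarith [(hp γ).1])))).lowerSemicontinuous
  obtain ⟨φ, -, hφ⟩ := LowerSemicontinuousOn.exists_isMinOn (f := Ψ)
    (s := WeakDual.toStrongDual ⁻¹' Metric.closedBall (0 : StrongDual ℝ H) R)
    ⟨0, by simpa using hR0⟩ (WeakDual.isCompact_closedBall _ _) (hlsc.lowerSemicontinuousOn _)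
  have hball : ∀ f : H, ‖f‖ ≤ R → Ψ φ ≤ Φ f := fun f hf => by
    have hmem : StrongDual.toWeakDual (InnerProductSpace.toDual ℝ H f) ∈
        WeakDual.toStrongDual ⁻¹' Metric.closedBall (0 : StrongDual ℝ H) R := by
      simpa using hf
    simpa [hΨ] using isMinOn_iff.1 hφ _ hmem
  refine ⟨(InnerProductSpace.toDual ℝ H).symm (WeakDual.toStrongDual φ), fun f => ?_⟩
  rcases le_total (Φ f) (Φ 0) with hf | hf
  · refine hball f (Real.le_sqrt_of_sq_le ?_)
    refine e.norm_sq_le_of_tsum_le hc hw hp (by positivity) ?_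
    rw [h0, hΦ] at hf
    exact le_add_self.trans hf
  · exact (hball 0 (by simpa using hR0)).trans hf

section Iteration

variable {e : HilbertBasis Γ ℝ H} {K : H →L[ℝ] H'} {w p : Γ → ℝ} {g : H'} {Φ : H → ℝ≥0∞}

theorem norm_sub_adjoint_comp_sq_le (hK : ‖K‖ ≤ 1) (u : H) :
    ‖u - ContinuousLinearMap.adjoint K (K u)‖ ^ 2 ≤ ‖u‖ ^ 2 - ‖K u‖ ^ 2 := by
  have h : ‖ContinuousLinearMap.adjoint K (K u)‖ ≤ ‖K u‖ := by
    refine ((ContinuousLinearMap.adjoint K).le_opNorm _).trans ?_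
    rw [LinearIsometryEquiv.norm_map]
    exact mul_le_of_le_one_left (norm_nonneg _) hK
  rw [norm_sub_sq_real, ContinuousLinearMap.adjoint_inner_right, real_inner_self_eq_norm_sq]
  nlinarith [norm_nonneg (ContinuousLinearMap.adjoint K (K u))]

theorem norm_apply_sub_sq_eq (K : H →L[ℝ] H') (g : H') (x y : H) :
    ‖K x - g‖ ^ 2 = ‖K y - g‖ ^ 2 - 2 * ⟪ContinuousLinearMap.adjoint K (g - K y), x - y⟫ +
      ‖K (x - y)‖ ^ 2 := by
  have h : K x - g = (K y - g) + K (x - y) := by rw [map_sub]; abel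
  rw [h, norm_add_sq_real, ContinuousLinearMap.adjoint_inner_left, ← neg_sub (K y) g,
    inner_neg_left]
  ring

/-- A point at which `2 K*(g - Kf)` is a subgradient of the penalty minimizes the functional. -/
theorem IsCoordSubgradient.minimizes (hw : ∀ γ, 0 ≤ w γ)
    (hΦ : ∀ f, Φ f = ENNReal.ofReal (‖K f - g‖ ^ 2) +
      ∑' γ, ENNReal.ofReal (w γ * |⟪f, e γ⟫| ^ p γ)) {y : H}
    (hy : IsCoordSubgradient e w p (ContinuousLinearMap.adjoint K (g - K y)) y) (x : H) :
    Φ y ≤ Φ x := by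
  by_cases hx : ∑' γ, ENNReal.ofReal (w γ * |⟪x, e γ⟫| ^ p γ) = ∞
  · simp [hΦ x, hx]
  obtain ⟨hyt, hle⟩ := hy.toReal_tsum_add_le hw x hx
  rw [hΦ, hΦ, ← ENNReal.ofReal_toReal hyt, ← ENNReal.ofReal_toReal hx,
    ← ENNReal.ofReal_add (by positivity) (by positivity),
    ← ENNReal.ofReal_add (by positivity) (by positivity)]
  refine ENNReal.ofReal_le_ofReal ?_
  rw [norm_apply_sub_sq_eq K g x y]
  nlinarith [sq_nonneg ‖K (x - y)‖]

/-- A minimizer is a fixed point of the thresholded Landweber step. -/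
theorem IsCoordSubgradient.eq_of_minimizer (hK : ‖K‖ ≤ 1) (hw : ∀ γ, 0 ≤ w γ)
    (hp : ∀ γ, p γ ≠ 0)
    (hΦ : ∀ f, Φ f = ENNReal.ofReal (‖K f - g‖ ^ 2) +
      ∑' γ, ENNReal.ofReal (w γ * |⟪f, e γ⟫| ^ p γ)) {x y : H} (hx : ∀ f, Φ x ≤ Φ f)
    (hy : IsCoordSubgradient e w p (x + ContinuousLinearMap.adjoint K (g - K x) - y) y) :
    y = x := by
  have hxt : ∑' γ, ENNReal.ofReal (w γ * |⟪x, e γ⟫| ^ p γ) ≠ ∞ := by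
    refine ne_top_of_le_ne_top ?_ ((le_add_self.trans (hΦ x).ge).trans (hx 0))
    rw [hΦ]
    simp [Real.zero_rpow (hp _)]
  obtain ⟨hyt, hle⟩ := hy.toReal_tsum_add_le hw x hxt
  have hmin := hx y
  rw [hΦ, hΦ, ← ENNReal.ofReal_toReal hyt, ← ENNReal.ofReal_toReal hxt,
    ← ENNReal.ofReal_add (by positivity) (by positivity),
    ← ENNReal.ofReal_add (by positivity) (by positivity),
    ENNReal.ofReal_le_ofReal_iff (by positivity), norm_apply_sub_sq_eq K g y x] at hmin
  have hsplit : ⟪x + ContinuousLinearMap.adjoint K (g - K x) - y, x - y⟫ =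
      ‖y - x‖ ^ 2 - ⟪ContinuousLinearMap.adjoint K (g - K x), y - x⟫ := by
    have : x + ContinuousLinearMap.adjoint K (g - K x) - y =
        (x - y) + ContinuousLinearMap.adjoint K (g - K x) := by abel
    rw [this, inner_add_left, real_inner_self_eq_norm_sq, norm_sub_rev, ← neg_sub y x,
      inner_neg_right]
    ring
  have hKn : ‖K (y - x)‖ ≤ ‖y - x‖ :=
    (K.le_opNorm _).trans (mul_le_of_le_one_left (norm_nonneg _) hK)
  rw [hsplit] at hle
  have hz : ‖y - x‖ ^ 2 ≤ 0 := by nlinarith [norm_nonneg (K (y - x))]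
  exact sub_eq_zero.1 (norm_eq_zero.1 (pow_eq_zero_iff two_ne_zero |>.1
    (le_antisymm hz (sq_nonneg _))))

variable {T : H → H}

/-- One step of the iteration is nonexpansive, with a quantified defect. -/
theorem norm_step_sub_sq_add_le (hK : ‖K‖ ≤ 1)
    (hT : ∀ f, IsCoordSubgradient e w p
      (f + ContinuousLinearMap.adjoint K (g - K f) - T f) (T f)) (x y : H) :
    ‖T x - T y‖ ^ 2 + ‖(x - y) - ContinuousLinearMap.adjoint K (K (x - y)) - (T x - T y)‖ ^ 2 +
      ‖K (x - y)‖ ^ 2 ≤ ‖x - y‖ ^ 2 := by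
  have h1 := (hT x).norm_sub_sq_add_le (hT y)
  have h2 := norm_sub_adjoint_comp_sq_le hK (x - y)
  rw [add_sub_cancel, add_sub_cancel] at h1
  have e1 : x + ContinuousLinearMap.adjoint K (g - K x) -
      (y + ContinuousLinearMap.adjoint K (g - K y)) =
        (x - y) - ContinuousLinearMap.adjoint K (K (x - y)) := by
    simp only [map_sub]; abel
  have e2 : x + ContinuousLinearMap.adjoint K (g - K x) - T x -
      (y + ContinuousLinearMap.adjoint K (g - K y) - T y) =
        (x - y) - ContinuousLinearMap.adjoint K (K (x - y)) - (T x - T y) := by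
    rw [← e1]; abel
  rw [e1, e2] at h1
  linarith

theorem norm_step_sub_le (hK : ‖K‖ ≤ 1)
    (hT : ∀ f, IsCoordSubgradient e w p
      (f + ContinuousLinearMap.adjoint K (g - K f) - T f) (T f)) (x y : H) :
    ‖T x - T y‖ ≤ ‖x - y‖ := by
  refine le_of_sq_le_sq ?_ (norm_nonneg _)
  have := norm_step_sub_sq_add_le hK hT x y
  nlinarith [sq_nonneg ‖K (x - y)‖,
    sq_nonneg ‖(x - y) - ContinuousLinearMap.adjoint K (K (x - y)) - (T x - T y)‖]

/-- The iterates converge in norm to a fixed point, as soon as a fixed point exists. -/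
theorem exists_fixedPoint_tendsto (hK : ‖K‖ ≤ 1) {c : ℝ} (hc : 0 < c) (hw : ∀ γ, c ≤ w γ)
    (hp : ∀ γ, 1 ≤ p γ ∧ p γ ≤ 2)
    (hT : ∀ f, IsCoordSubgradient e w p
      (f + ContinuousLinearMap.adjoint K (g - K f) - T f) (T f))
    {z : H} (hz : T z = z) {f : ℕ → H} (hf : ∀ n, f (n + 1) = T (f n)) :
    ∃ y, T y = y ∧ Filter.Tendsto (fun n => ‖f n - y‖) Filter.atTop (nhds 0) := by
  have hanti : ∀ {y : H}, T y = y → Antitone fun n => ‖f n - y‖ := fun {y} hy =>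
    antitone_nat_of_succ_le fun n => by
      simpa only [hf, hy] using norm_step_sub_le hK hT (f n) y
  set d : ℕ → H := fun n =>
    (f n - z) - ContinuousLinearMap.adjoint K (K (f n - z)) - (T (f n) - T z) with hd
  have hgap : Filter.Tendsto (fun n => ‖f n - z‖ ^ 2 - ‖f (n + 1) - z‖ ^ 2)
      Filter.atTop (nhds 0) := by
    have hlim := (tendsto_atTop_ciInf (hanti hz)
      ⟨0, by rintro _ ⟨n, rfl⟩; exact norm_nonneg _⟩).pow 2
    simpa using hlim.sub (hlim.comp (Filter.tendsto_add_atTop_nat 1))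
  have hstep : ∀ n, ‖d n‖ ^ 2 + ‖K (f n - z)‖ ^ 2 ≤ ‖f n - z‖ ^ 2 - ‖f (n + 1) - z‖ ^ 2 :=
    fun n => by
      have h := norm_step_sub_sq_add_le hK hT (f n) z
      rw [hf]
      simp only [hd]
      rw [hz] at h ⊢
      linarith
  have tendsto_of_sq_le : ∀ a : ℕ → ℝ, (∀ n, 0 ≤ a n) →
      (∀ n, a n ^ 2 ≤ ‖f n - z‖ ^ 2 - ‖f (n + 1) - z‖ ^ 2) →
      Filter.Tendsto a Filter.atTop (nhds 0) := fun a ha hle => by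
    have h := (squeeze_zero (fun n => sq_nonneg (a n)) hle hgap).sqrt
    simpa [Real.sqrt_sq (ha _)] using h
  have hd0 : Filter.Tendsto d Filter.atTop (nhds 0) := tendsto_zero_iff_norm_tendsto_zero.2 <|
    tendsto_of_sq_le _ (fun n => norm_nonneg _) fun n => by
      linarith [hstep n, sq_nonneg ‖K (f n - z)‖]
  have hK0 : Filter.Tendsto (fun n => K (f n - z)) Filter.atTop (nhds 0) :=
    tendsto_zero_iff_norm_tendsto_zero.2 <|
      tendsto_of_sq_le _ (fun n => norm_nonneg _) fun n => by
        linarith [hstep n, sq_nonneg ‖d n‖]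
  have hreg : Filter.Tendsto (fun n => f n - T (f n)) Filter.atTop (nhds 0) := by
    have h := hd0.add (((ContinuousLinearMap.adjoint K).continuous.tendsto 0).comp hK0)
    rw [map_zero, add_zero] at h
    refine h.congr fun n => ?_
    simp only [hd, hz, Function.comp_apply]
    abel
  set B : ℝ := max 1 ‖f 0 - z‖
  have hbound : ∀ n, ‖f n - z‖ ≤ B := fun n =>
    ((hanti hz) (Nat.zero_le n)).trans (le_max_right _ _)
  obtain ⟨F, hF⟩ := IsCoordSubgradient.exists_finset_norm_sub_sum_le hc hw hp
    (le_max_left 1 ‖f 0 - z‖) (by simpa only [hz] using hT z)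
  have htail : Filter.Tendsto
      (fun n => (f (n + 1) - z) - ∑ γ ∈ F, ⟪f (n + 1) - z, e γ⟫ • e γ) Filter.atTop (nhds 0) := by
    refine squeeze_zero_norm (a := fun n => 16 * B / c * ‖d n‖) (fun n => ?_)
      (by simpa using hd0.norm.const_mul (16 * B / c))
    have h := hF _ _ (by simpa only [hf] using hT (f n)) (hbound (n + 1))
    convert h using 3
    simp only [hd, hz, map_sub]
    abel
  obtain ⟨a, -, φ, hφ, ha⟩ := tendsto_subseq_of_bounded
    (s := Metric.closedBall (0 : F → ℝ) B) Metric.isBounded_closedBall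
    (x := fun n γ => ⟪f (n + 1) - z, e γ⟫) fun n => by
      rw [mem_closedBall_zero_iff, pi_norm_le_iff_of_nonneg (by positivity)]
      intro γ
      have h := norm_inner_le_norm (𝕜 := ℝ) (f (n + 1) - z) (e γ)
      rw [e.orthonormal.1, mul_one] at h
      exact h.trans (hbound _)
  have hsum : Filter.Tendsto (fun n => ∑ γ ∈ F, ⟪f (φ n + 1) - z, e γ⟫ • e γ) Filter.atTop
      (nhds (∑ γ : F, a γ • e γ)) := by
    simp only [← F.sum_coe_sort]
    exact tendsto_finsetSum _ fun γ _ => ((tendsto_pi_nhds.1 ha) γ).smul_const _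
  set y := z + ∑ γ : F, a γ • e γ
  have hφ1 : Filter.Tendsto (fun n => φ n + 1) Filter.atTop Filter.atTop :=
    (Filter.tendsto_add_atTop_nat 1).comp hφ.tendsto_atTop
  have hconv : Filter.Tendsto (fun n => f (φ n + 1)) Filter.atTop (nhds y) := by
    have h := ((htail.comp hφ.tendsto_atTop).add hsum).const_add z
    rw [zero_add] at h
    refine h.congr fun n => ?_
    simp
  have hTc : Continuous T := (LipschitzWith.of_dist_le_mul (K := 1) fun x y => by
    simpa [dist_eq_norm] using norm_step_sub_le hK hT x y).continuous
  have hfix : T y = y := by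
    have h1 := hconv.sub ((hTc.tendsto y).comp hconv)
    exact (sub_eq_zero.1 (tendsto_nhds_unique h1 (hreg.comp hφ1))).symm
  refine ⟨y, hfix, (tendsto_iff_tendsto_subseq_of_antitone (hanti hfix) hφ1).2 ?_⟩
  exact tendsto_iff_norm_sub_tendsto_zero.1 hconv

end Iteration

end HilbertSpace

/-- Strong convergence theorem: the iterates `f^{n+1} = T(f^n)` converge in norm to a
minimizer `f*` of `Φ`. -/
theorem stmt_16
    {H H' : Type*} [NormedAddCommGroup H] [InnerProductSpace ℝ H] [CompleteSpace H]
    [NormedAddCommGroup H'] [InnerProductSpace ℝ H'] [CompleteSpace H']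
    {Γ : Type*} [Countable Γ]
    (e : HilbertBasis Γ ℝ H)
    (K : H →L[ℝ] H') (hK : ‖K‖ < 1)
    (w : Γ → ℝ) (c : ℝ) (hc : 0 < c) (hw : ∀ γ, c ≤ w γ)
    (p : Γ → ℝ) (hp : ∀ γ, 1 ≤ p γ ∧ p γ ≤ 2)
    (g : H')
    (Φ : H → ℝ≥0∞)
    (hΦ : ∀ f, Φ f = ENNReal.ofReal (‖K f - g‖ ^ 2) +
      ∑' γ, ENNReal.ofReal (w γ * |⟪f, e γ⟫| ^ (p γ)))
    (S : Γ → ℝ → ℝ)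
    (hS : ∀ (γ : Γ) (b x : ℝ),
      (S γ b) ^ 2 - 2 * b * S γ b + w γ * |S γ b| ^ (p γ) ≤
        x ^ 2 - 2 * b * x + w γ * |x| ^ (p γ))
    (T : H → H)
    (hT : ∀ (f : H) (γ : Γ),
      ⟪T f, e γ⟫ = S γ ⟪f + (ContinuousLinearMap.adjoint K) (g - K f), e γ⟫)
    (fseq : ℕ → H)
    (hstep : ∀ n, fseq (n + 1) = T (fseq n)) :
    ∃ fstar : H, (∀ f : H, Φ fstar ≤ Φ f) ∧
      Filter.Tendsto (fun n => ‖fseq n - fstar‖) Filter.atTop (nhds 0) := by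
  have hw0 : ∀ γ, 0 ≤ w γ := fun γ => hc.le.trans (hw γ)
  have hsub : ∀ f, IsCoordSubgradient e w p
      (f + ContinuousLinearMap.adjoint K (g - K f) - T f) (T f) := fun f γ x => by
    rw [inner_sub_left, hT]
    exact subgradient_of_minimizer (hw0 γ) (hp γ).1 (hS γ _) x
  obtain ⟨z, hz⟩ := exists_minimizer e K hc hw hp g Φ hΦ
  have hfix : T z = z := (hsub z).eq_of_minimizer hK.le hw0
    (fun γ => by linarith [(hp γ).1]) hΦ hz
  obtain ⟨y, hy, hlim⟩ := exists_fixedPoint_tendsto hK.le hc hw hp hsub hfix hstep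
  refine ⟨y, IsCoordSubgradient.minimizes hw0 hΦ ?_, hlim⟩
  simpa [hy] using hsub y
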